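/- (Claim 2: direct part of Theorem 3 with exponentially decaying errors and deterministic encoders.) Let W(y,z|x) be a two-receiver BC, let P be a PMF on 𝒳, and let 0 < R_𝒴 < I(P, W_𝒴) and 0 < R_𝒵 < I(P, W_𝒵). Then there exist τ > 0 and n₀ ∈ ℕ such that for every n ≥ n₀ there exists an (n, ℳ_𝒴, ℳ_𝒵, e^{−nτ}, e^{−nτ}, e^{−nτ}, e^{−nτ}) average-error ID code for the BC with (1/n)·log log |ℳ_𝒴| ≥ R_𝒴 and (1/n)·log log |ℳ_𝒵| ≥ R_𝒵, in which moreover every encoding PMF Q_{m_𝒴,m_𝒵} is a point mass on a single sequence 𝐱 ∈ 𝒳ⁿ (i.e., the encoder is deterministic). -/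

import Mathlib

open scoped Classical
open Finset

noncomputable section

/-- `P` is a probability mass function on the finite type `X`. -/
def IsPMF {X : Type*} [Fintype X] (P : X → ℝ) : Prop :=
  (∀ x, 0 ≤ P x) ∧ ∑ x, P x = 1

/-- `W` is a (discrete memoryless) channel from `X` to `Y`. -/
def IsChannel {X Y : Type*} [Fintype Y] (W : X → Y → ℝ) : Prop :=
  (∀ x y, 0 ≤ W x y) ∧ ∀ x, ∑ y, W x y = 1

/-- The `n`-fold memoryless extension `W^n(𝐲|𝐱) = ∏ᵢ W(yᵢ|xᵢ)`. -/
def Wn {X Y : Type*} (W : X → Y → ℝ) (n : ℕ) (x : Fin n → X) (y : Fin n → Y) : ℝ :=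
  ∏ i, W (x i) (y i)

/-- Mutual information `I(P,W)` (natural logarithm), with the convention that
terms with `P x * W x y = 0` contribute `0`. -/
def mutInf {X Y : Type*} [Fintype X] [Fintype Y] (P : X → ℝ) (W : X → Y → ℝ) : ℝ :=
  ∑ x, ∑ y, if P x * W x y = 0 then 0
    else P x * W x y * Real.log (W x y / ∑ x', P x' * W x' y)

/-- The error requirements of an `(n, M, l1, l2)` ID code for the DMC `W`:
maximum probability of missed identification at most `l1`, maximum probability
of wrong identification at most `l2`. -/
def IDCodeErr {X Y M : Type*} [Fintype X] [Fintype Y]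
    (n : ℕ) (W : X → Y → ℝ) (Q : M → (Fin n → X) → ℝ)
    (D : M → Finset (Fin n → Y)) (l1 l2 : ℝ) : Prop :=
  (∀ m, ∑ x, Q m x * ∑ y ∈ (D m)ᶜ, Wn W n x y ≤ l1) ∧
  (∀ m m', m ≠ m' → ∑ x, Q m x * ∑ y ∈ D m', Wn W n x y ≤ l2)

/-- `(n, M, l1, l2)` ID code for the DMC `W`. -/
def IsIDCode {X Y M : Type*} [Fintype X] [Fintype Y]
    (n : ℕ) (W : X → Y → ℝ) (Q : M → (Fin n → X) → ℝ)
    (D : M → Finset (Fin n → Y)) (l1 l2 : ℝ) : Prop :=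
  (∀ m, IsPMF (Q m)) ∧ IDCodeErr n W Q D l1 l2

/-- `W` is a two-receiver broadcast channel from `X` to `Y × Z`. -/
def IsBC {X Y Z : Type*} [Fintype Y] [Fintype Z] (W : X → Y → Z → ℝ) : Prop :=
  (∀ x y z, 0 ≤ W x y z) ∧ ∀ x, ∑ y, ∑ z, W x y z = 1

/-- Marginal channel to terminal `Y`. -/
def margY {X Y Z : Type*} [Fintype Z] (W : X → Y → Z → ℝ) : X → Y → ℝ :=
  fun x y => ∑ z, W x y z

/-- Marginal channel to terminal `Z`. -/
def margZ {X Y Z : Type*} [Fintype Y] (W : X → Y → Z → ℝ) : X → Z → ℝ :=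
  fun x z => ∑ y, W x y z

/-- `(n, ℳ_Y, ℳ_Z, l1Y, l2Y, l1Z, l2Z)` average-error ID code for the BC `W`:
every `Q my mz` is a PMF on `Xⁿ`, and the mixtures (averaging uniformly over the
other receiver's message) form ID codes for the marginal channels. -/
def IsBCIDCode {X Y Z : Type*} [Fintype X] [Fintype Y] [Fintype Z]
    (n kY kZ : ℕ) (W : X → Y → Z → ℝ)
    (Q : Fin kY → Fin kZ → (Fin n → X) → ℝ)
    (DY : Fin kY → Finset (Fin n → Y)) (DZ : Fin kZ → Finset (Fin n → Z))
    (l1Y l2Y l1Z l2Z : ℝ) : Prop :=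
  (∀ my mz, IsPMF (Q my mz)) ∧
  IDCodeErr n (margY W) (fun my x => (kZ : ℝ)⁻¹ * ∑ mz, Q my mz x) DY l1Y l2Y ∧
  IDCodeErr n (margZ W) (fun mz x => (kY : ℝ)⁻¹ * ∑ my, Q my mz x) DZ l1Z l2Z

/-- A rate pair is achievable for the BC `W` under the average-error criterion. -/
def BCAchievable {X Y Z : Type*} [Fintype X] [Fintype Y] [Fintype Z]
    (W : X → Y → Z → ℝ) (Rp : ℝ × ℝ) : Prop :=
  0 ≤ Rp.1 ∧ 0 ≤ Rp.2 ∧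
  ∀ l1Y l2Y l1Z l2Z : ℝ, 0 < l1Y → 0 < l2Y → 0 < l1Z → 0 < l2Z →
    ∃ n₀ : ℕ, ∀ n : ℕ, n₀ ≤ n →
      ∃ (kY kZ : ℕ) (Q : Fin kY → Fin kZ → (Fin n → X) → ℝ)
        (DY : Fin kY → Finset (Fin n → Y)) (DZ : Fin kZ → Finset (Fin n → Z)),
        IsBCIDCode n kY kZ W Q DY DZ l1Y l2Y l1Z l2Z ∧
        ((0 < Rp.1 → Rp.1 ≤ (1 / n) * Real.log (Real.log kY)) ∧ (Rp.1 = 0 → kY = 1)) ∧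
        ((0 < Rp.2 → Rp.2 ≤ (1 / n) * Real.log (Real.log kZ)) ∧ (Rp.2 = 0 → kZ = 1))

/-- The probability of a family of independent `p`-distributed letters. -/
def iidW {V α : Type*} [Fintype V] (p : α → ℝ) (x : V → α) : ℝ := ∏ v, p (x v)

lemma iidW_nonneg {V α : Type*} [Fintype V] {p : α → ℝ} (hp : ∀ a, 0 ≤ p a) (x : V → α) :
    0 ≤ iidW p x := prod_nonneg fun _ _ => hp _

lemma sum_iidW_mul_prod {V α : Type*} [Fintype V] [DecidableEq V] [Fintype α] (p : α → ℝ)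
    (f : V → α → ℝ) :
    ∑ x : V → α, iidW p x * ∏ v, f v (x v) = ∏ v, ∑ a, p a * f v a := by
  simp only [iidW, ← prod_mul_distrib]
  rw [Finset.prod_univ_sum, Fintype.piFinset_univ]

lemma sum_iidW {V α : Type*} [Fintype V] [DecidableEq V] [Fintype α] {p : α → ℝ}
    (hp : ∑ a, p a = 1) :
    ∑ x : V → α, iidW p x = 1 := by
  simpa [hp] using sum_iidW_mul_prod (V := V) p (fun _ _ => 1)

lemma iidW_update {V α : Type*} [Fintype V] [DecidableEq V] (p : α → ℝ) (x : V → α) (v : V)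
    (a : α) :
    iidW p (Function.update x v a) * p (x v) = iidW p x * p a := by
  unfold iidW
  rw [← Finset.mul_prod_erase univ _ (mem_univ v),
    ← Finset.mul_prod_erase univ (fun u => p (x u)) (mem_univ v)]
  have : ∏ u ∈ univ.erase v, p (Function.update x v a u) = ∏ u ∈ univ.erase v, p (x u) :=
    prod_congr rfl fun u hu => by rw [Function.update_of_ne (ne_of_mem_erase hu)]
  rw [this, Function.update_self]
  ring

/-- Resampling one coordinate of an i.i.d. family does not change expectations. -/
lemma sum_iidW_resample {V α : Type*} [Fintype V] [DecidableEq V] [Fintype α] {p : α → ℝ}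
    (hp : ∑ a, p a = 1)
    (v : V) (F : (V → α) → ℝ) :
    ∑ x, iidW p x * F x = ∑ x, iidW p x * ∑ a, p a * F (Function.update x v a) := by
  have h1 : ∑ x, iidW p x * F x = ∑ z : (V → α) × α, iidW p z.1 * p z.2 * F z.1 := by
    rw [Fintype.sum_prod_type]
    refine sum_congr rfl fun x _ => ?_
    simp only [mul_right_comm _ (p _) (F x)]
    rw [← mul_sum, hp, mul_one]
  have h2 : ∑ x, iidW p x * ∑ a, p a * F (Function.update x v a)
      = ∑ z : (V → α) × α, iidW p z.1 * p z.2 * F (Function.update z.1 v z.2) := by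
    rw [Fintype.sum_prod_type]
    refine sum_congr rfl fun x _ => ?_
    simp only [mul_sum, mul_assoc]
  rw [h1, h2]
  refine sum_nbij' (fun z => (Function.update z.1 v z.2, z.1 v))
    (fun z => (Function.update z.1 v z.2, z.1 v)) (by simp) (by simp) (by simp) (by simp) ?_
  rintro ⟨x, a⟩ _
  simp [iidW_update]

/-- The expected product over `U` of functions whose choice does not depend on the letters
indexed by `U`. -/
lemma sum_iidW_mul_prod_le {V α : Type*} [Fintype V] [DecidableEq V] [Fintype α] {p : α → ℝ}
    (hp0 : ∀ a, 0 ≤ p a) (hp : ∑ a, p a = 1) (H : (V → α) → α → ℝ) (hH0 : ∀ x a, 0 ≤ H x a)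
    {C : ℝ} (hC : ∀ x, ∑ a, p a * H x a ≤ C) (U : Finset V)
    (hU : ∀ v ∈ U, ∀ x a, H (Function.update x v a) = H x) :
    ∑ x, iidW p x * ∏ u ∈ U, H x (x u) ≤ C ^ #U := by
  have hC0 : 0 ≤ C := by
    rcases isEmpty_or_nonempty (V → α) with h | ⟨⟨x⟩⟩
    · have : (∑ x : V → α, iidW p x) = 0 := by simp
      rw [sum_iidW hp] at this
      norm_num at this
    · exact le_trans (sum_nonneg fun a _ => mul_nonneg (hp0 a) (hH0 x a)) (hC x)
  induction U using Finset.induction_on with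
  | empty => simp [sum_iidW hp]
  | insert v U hv ih =>
    rw [sum_iidW_resample hp v, card_insert_of_notMem hv, pow_succ']
    have key : ∀ x : V → α, ∑ a, p a * ∏ u ∈ insert v U,
        H (Function.update x v a) (Function.update x v a u)
        = (∑ a, p a * H x a) * ∏ u ∈ U, H x (x u) := by
      intro x
      rw [sum_mul]
      refine sum_congr rfl fun a _ => ?_
      rw [prod_insert hv, hU v (mem_insert_self _ _), Function.update_self, mul_assoc]
      congr 2
      exact prod_congr rfl fun u hu => by
        rw [Function.update_of_ne (ne_of_mem_of_not_mem hu hv)]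
    simp only [key]
    calc ∑ x, iidW p x * ((∑ a, p a * H x a) * ∏ u ∈ U, H x (x u))
        ≤ ∑ x, iidW p x * (C * ∏ u ∈ U, H x (x u)) := by
          gcongr with x _
          · exact iidW_nonneg hp0 x
          · exact prod_nonneg fun _ _ => hH0 _ _
          · exact hC x
      _ = C * ∑ x, iidW p x * ∏ u ∈ U, H x (x u) := by
          rw [mul_sum]; exact sum_congr rfl fun _ _ => by ring
      _ ≤ C * C ^ #U := by
          gcongr
          exact ih fun u hu => hU u (mem_insert_of_mem hu)

lemma exp_le_one_add_two_mul {t : ℝ} (h0 : 0 ≤ t) (h1 : t ≤ 1) : Real.exp t ≤ 1 + 2 * t := by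
  have h := convexOn_exp.2 (Set.mem_univ 0) (Set.mem_univ 1) (sub_nonneg.2 h1) h0 (by ring)
  simp only [smul_eq_mul, mul_zero, mul_one, zero_add, Real.exp_zero] at h
  nlinarith [Real.exp_one_lt_d9]

/-- A Chernoff bound for sums of i.i.d. `[0,1]`-valued terms, where the function may depend
on the letters outside of the range of summation. -/
lemma sum_iidW_exp_le {V α : Type*} [Fintype V] [DecidableEq V] [Fintype α] {p : α → ℝ}
    (hp0 : ∀ a, 0 ≤ p a) (hp : ∑ a, p a = 1) (g : (V → α) → α → ℝ) (hg0 : ∀ x a, 0 ≤ g x a)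
    (hg1 : ∀ x a, g x a ≤ 1) {μ : ℝ} (hμ : ∀ x, ∑ a, p a * g x a ≤ μ) (hμ0 : 0 ≤ μ)
    (U : Finset V)
    (hU : ∀ v ∈ U, ∀ x a, g (Function.update x v a) = g x) {N : ℕ} (hN : #U ≤ N) :
    ∑ x, iidW p x * Real.exp (∑ u ∈ U, g x (x u) - 3 * μ * N) ≤ Real.exp (-(μ * N)) := by
  have h := sum_iidW_mul_prod_le hp0 hp (fun x a => Real.exp (g x a))
    (fun x a => (Real.exp_pos _).le) (C := Real.exp (2 * μ)) (fun x => ?_) U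
    (fun v hv x a => by rw [hU v hv])
  · have h2 : ∑ x, iidW p x * Real.exp (∑ u ∈ U, g x (x u) - 3 * μ * N)
        = (∑ x, iidW p x * ∏ u ∈ U, Real.exp (g x (x u))) * Real.exp (-(3 * μ * N)) := by
      rw [sum_mul]
      refine sum_congr rfl fun x _ => ?_
      rw [← Real.exp_sum, sub_eq_add_neg, Real.exp_add, ← mul_assoc (iidW p x)]
    rw [h2]
    calc _ ≤ Real.exp (2 * μ) ^ #U * Real.exp (-(3 * μ * N)) := by gcongr
      _ ≤ Real.exp (-(μ * N)) := by
        rw [← Real.exp_nat_mul, ← Real.exp_add]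
        apply Real.exp_le_exp.2
        have : (#U : ℝ) ≤ N := by exact_mod_cast hN
        nlinarith
  · calc ∑ a, p a * Real.exp (g x a) ≤ ∑ a, p a * (1 + 2 * g x a) := by
          gcongr with a _
          · exact hp0 a
          · exact exp_le_one_add_two_mul (hg0 x a) (hg1 x a)
      _ = 1 + 2 * ∑ a, p a * g x a := by
          simp only [mul_add, mul_one, sum_add_distrib, hp, mul_sum, mul_left_comm]
      _ ≤ 1 + 2 * μ := by linarith [hμ x]
      _ ≤ Real.exp (2 * μ) := by linarith [Real.add_one_le_exp (2 * μ)]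

/-- The output distribution of the channel `W` with input distribution `P`. -/
def outP {X Y : Type*} [Fintype X] (P : X → ℝ) (W : X → Y → ℝ) (y : Y) : ℝ := ∑ x, P x * W x y

/-- The output sequences whose information density with `x` is at least `n * θ`. -/
def typSet {X Y : Type*} [Fintype X] [Fintype Y] (P : X → ℝ) (W : X → Y → ℝ) (θ : ℝ) (n : ℕ)
    (x : Fin n → X) : Finset (Fin n → Y) :=
  univ.filter fun y => Real.exp (n * θ) * iidW (outP P W) y ≤ Wn W n x y

lemma sum_iidW_mul_Wn {X Y : Type*} [Fintype X] {P : X → ℝ} {W : X → Y → ℝ} {n : ℕ}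
    (y : Fin n → Y) : ∑ x, iidW P x * Wn W n x y = iidW (outP P W) y :=
  sum_iidW_mul_prod P fun i x => W x (y i)

section Channel

variable {X Y : Type*} [Fintype Y] {P : X → ℝ} {W : X → Y → ℝ} {n : ℕ} {θ : ℝ}

lemma Wn_nonneg (hW : IsChannel W) (x : Fin n → X) (y : Fin n → Y) : 0 ≤ Wn W n x y :=
  prod_nonneg fun _ _ => hW.1 _ _

lemma sum_Wn (hW : IsChannel W) (x : Fin n → X) : ∑ y, Wn W n x y = 1 := by
  have := Finset.prod_univ_sum (fun _ : Fin n => (univ : Finset Y)) (fun i y => W (x i) y)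
  simp only [hW.2, prod_const_one, Fintype.piFinset_univ] at this
  exact this.symm

lemma sum_Wn_le_one (hW : IsChannel W) (x : Fin n → X) (D : Finset (Fin n → Y)) :
    ∑ y ∈ D, Wn W n x y ≤ 1 := by
  rw [← sum_Wn hW x]
  exact sum_le_sum_of_subset_of_nonneg (subset_univ _) fun _ _ _ => Wn_nonneg hW _ _

variable [Fintype X]

lemma outP_nonneg (hP : IsPMF P) (hW : IsChannel W) (y : Y) : 0 ≤ outP P W y :=
  sum_nonneg fun x _ => mul_nonneg (hP.1 x) (hW.1 x y)

lemma sum_typSet_le (hW : IsChannel W) (x : Fin n → X) :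
    ∑ y ∈ typSet P W θ n x, iidW (outP P W) y ≤ Real.exp (-(n * θ)) := by
  have h : ∀ y ∈ typSet P W θ n x,
      iidW (outP P W) y ≤ Real.exp (-(n * θ)) * Wn W n x y := by
    intro y hy
    rw [Real.exp_neg, ← div_eq_inv_mul, le_div_iff₀ (Real.exp_pos _), mul_comm]
    exact (mem_filter.1 hy).2
  refine (sum_le_sum h).trans ?_
  rw [← mul_sum]
  exact mul_le_of_le_one_right (Real.exp_pos _).le (sum_Wn_le_one hW _ _)

lemma sum_biUnion_le_sum_sum {ι β : Type*} [DecidableEq β] (s : Finset ι) (t : ι → Finset β)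
    {f : β → ℝ}
    (hf : ∀ b, 0 ≤ f b) : ∑ b ∈ s.biUnion t, f b ≤ ∑ i ∈ s, ∑ b ∈ t i, f b := by
  induction s using Finset.induction_on with
  | empty => simp
  | insert i s hi ih =>
    rw [biUnion_insert, sum_insert hi]
    have := sum_union_inter (s₁ := t i) (s₂ := s.biUnion t) (f := f)
    have h2 : 0 ≤ ∑ b ∈ t i ∩ s.biUnion t, f b := sum_nonneg fun _ _ => hf _
    linarith

lemma sum_iidW_biUnion_typSet_le {V : Type*} (hW : IsChannel W)
    (hP : IsPMF P) (A : Finset V) (c : V → Fin n → X) :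
    ∑ x, iidW P x * ∑ y ∈ A.biUnion (fun v => typSet P W θ n (c v)), Wn W n x y
      ≤ #A * Real.exp (-(n * θ)) := by
  simp only [mul_sum]
  rw [sum_comm]
  simp only [sum_iidW_mul_Wn]
  have h0 : ∀ y : Fin n → Y, 0 ≤ iidW (outP P W) y := iidW_nonneg (outP_nonneg hP hW)
  calc ∑ y ∈ A.biUnion (fun v => typSet P W θ n (c v)), iidW (outP P W) y
      ≤ ∑ v ∈ A, ∑ y ∈ typSet P W θ n (c v), iidW (outP P W) y :=
        sum_biUnion_le_sum_sum _ _ h0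
    _ ≤ ∑ v ∈ A, Real.exp (-(n * θ)) := sum_le_sum fun v _ => sum_typSet_le hW (c v)
    _ = _ := by rw [sum_const, nsmul_eq_mul]

lemma exists_exp_tilt_lt_one (hW : IsChannel W) (hP : IsPMF P) (hθ : θ < mutInf P W) :
    ∃ s : ℝ, 0 < s ∧
      ∑ x, ∑ y, P x * (W x y * Real.exp (s * (θ - Real.log (W x y / outP P W y)))) < 1 := by
  set φ : ℝ → ℝ := fun s =>
    ∑ x, ∑ y, P x * (W x y * Real.exp (s * (θ - Real.log (W x y / outP P W y)))) with hφ
  have hsum : ∑ x, ∑ y, P x * W x y = 1 := by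
    simp only [← mul_sum, hW.2, mul_one, hP.2]
  have hφ0 : φ 0 = 1 := by simp [hφ, hsum]
  have hd : HasDerivAt φ (∑ x, ∑ y, P x * (W x y * (θ - Real.log (W x y / outP P W y)))) 0 := by
    refine HasDerivAt.fun_sum fun x _ => HasDerivAt.fun_sum fun y _ => ?_
    refine HasDerivAt.const_mul _ (HasDerivAt.const_mul _ ?_)
    simpa using ((hasDerivAt_id (0 : ℝ)).mul_const (θ - Real.log (W x y / outP P W y))).exp
  have hneg : ∑ x, ∑ y, P x * (W x y * (θ - Real.log (W x y / outP P W y))) = θ - mutInf P W := by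
    have : mutInf P W = ∑ x, ∑ y, P x * W x y * Real.log (W x y / outP P W y) := by
      unfold mutInf outP
      refine sum_congr rfl fun x _ => sum_congr rfl fun y _ => ?_
      split_ifs with h
      · rw [h, zero_mul]
      · rfl
    rw [this]
    have h2 : θ = ∑ x, ∑ y, P x * W x y * θ := by
      simp only [← sum_mul, hsum, one_mul]
    nth_rewrite 2 [h2]
    simp only [← sum_sub_distrib]
    exact sum_congr rfl fun x _ => sum_congr rfl fun y _ => by ring
  rw [hneg] at hd
  have ht := hd.tendsto_slope_zero_right
  have hev := ht.eventually_lt_const (sub_neg.2 hθ)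
  obtain ⟨s, hs1, hs2⟩ := (hev.and self_mem_nhdsWithin).exists
  refine ⟨s, hs2, ?_⟩
  have hs2 : 0 < s := hs2
  rw [zero_add, hφ0, smul_eq_mul] at hs1
  have := neg_of_mul_neg_right hs1 (inv_pos.2 hs2).le
  change φ s < 1
  linarith

/-- A Chernoff bound for the information density. -/
lemma exists_sum_compl_typSet_le (hW : IsChannel W) (hP : IsPMF P) (hθ : θ < mutInf P W) :
    ∃ γ : ℝ, 0 < γ ∧ ∀ n : ℕ,
      ∑ x, iidW P x * ∑ y ∈ (typSet P W θ n x)ᶜ, Wn W n x y ≤ Real.exp (-(n * γ)) := by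
  obtain ⟨s, hs, hlt⟩ := exists_exp_tilt_lt_one hW hP hθ
  set h : X → Y → ℝ := fun x y =>
    W x y * Real.exp (s * (θ - Real.log (W x y / outP P W y))) with hh
  have hh0 : ∀ x y, 0 ≤ h x y := fun x y => mul_nonneg (hW.1 x y) (Real.exp_pos _).le
  set φ := ∑ x, ∑ y, P x * h x y with hφ
  have hφ0 : 0 ≤ φ := sum_nonneg fun x _ => sum_nonneg fun y _ => mul_nonneg (hP.1 x) (hh0 x y)
  refine ⟨-Real.log (max φ (1 / 2)), ?_, fun n => ?_⟩
  · rw [neg_pos]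
    exact Real.log_neg (by positivity) (max_lt hlt (by norm_num))
  have hexp : Real.exp (-(n * -Real.log (max φ (1 / 2)))) = max φ (1 / 2) ^ n := by
    rw [mul_neg, neg_neg, Real.exp_nat_mul, Real.exp_log (by positivity)]
  rw [hexp]
  have hpt : ∀ (x : Fin n → X), ∀ y ∈ (typSet P W θ n x)ᶜ,
      Wn W n x y ≤ ∏ i, h (x i) (y i) := by
    intro x y hy
    have hlt : Wn W n x y < Real.exp (n * θ) * iidW (outP P W) y := by
      simpa [typSet] using hy
    rcases (Wn_nonneg hW x y).eq_or_lt with h0 | hpos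
    · rw [← h0]; exact prod_nonneg fun _ _ => hh0 _ _
    have hWi : ∀ i, 0 < W (x i) (y i) := fun i =>
      (hW.1 _ _).lt_of_ne' (prod_ne_zero_iff.1 hpos.ne' i (mem_univ i))
    have hout : iidW (outP P W) y ≠ 0 := by
      rintro h0
      rw [h0, mul_zero] at hlt
      linarith
    have hOi : ∀ i, 0 < outP P W (y i) := fun i =>
      (outP_nonneg hP hW _).lt_of_ne' (prod_ne_zero_iff.1 hout i (mem_univ i))
    have hprod : ∏ i, h (x i) (y i) = Wn W n x y *
        Real.exp (s * (n * θ - ∑ i, Real.log (W (x i) (y i) / outP P W (y i)))) := by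
      simp only [hh, prod_mul_distrib, ← Real.exp_sum, ← mul_sum, sum_sub_distrib]
      simp [Wn]
    rw [hprod]
    refine le_mul_of_one_le_right hpos.le (Real.one_le_exp (mul_nonneg hs.le ?_))
    rw [← Real.log_prod (fun i _ => (div_pos (hWi i) (hOi i)).ne'), prod_div_distrib, sub_nonneg]
    have hO : 0 < iidW (outP P W) y := prod_pos fun i _ => hOi i
    calc Real.log ((∏ i, W (x i) (y i)) / ∏ i, outP P W (y i))
        ≤ Real.log (Real.exp (n * θ)) := by
          refine Real.log_le_log (div_pos hpos hO) ?_
          exact (div_le_iff₀ hO).2 hlt.le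
      _ = n * θ := Real.log_exp _
  calc ∑ x, iidW P x * ∑ y ∈ (typSet P W θ n x)ᶜ, Wn W n x y
      ≤ ∑ x : Fin n → X, iidW P x * ∑ y : Fin n → Y, ∏ i, h (x i) (y i) := by
        gcongr with x _
        · exact iidW_nonneg hP.1 x
        · exact (sum_le_sum (hpt x)).trans
            (sum_le_sum_of_subset_of_nonneg (subset_univ _) fun _ _ _ =>
              prod_nonneg fun _ _ => hh0 _ _)
    _ = ∑ x : Fin n → X, iidW P x * ∏ i, ∑ y, h (x i) y := by
        refine sum_congr rfl fun x _ => ?_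
        rw [Finset.prod_univ_sum, Fintype.piFinset_univ]
    _ = φ ^ n := by
        rw [sum_iidW_mul_prod P (fun _ a => ∑ y, h a y)]
        simp [hφ, mul_sum]
    _ ≤ _ := by gcongr; exact le_max_left _ _

/-- Sum of the exponential penalties for violations of the error requirements by the random
codebook `c`. -/
def penalty {V M : Type*} [DecidableEq V] [Fintype M] (P : X → ℝ) (W : X → Y → ℝ) (θ : ℝ) (n : ℕ)
    (A : M → Finset V) (t : ℝ)
    (c : V → Fin n → X) : ℝ :=
  (∑ m, Real.exp (∑ v ∈ A m, ∑ y ∈ (typSet P W θ n (c v))ᶜ, Wn W n (c v) y - t)) +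
  ∑ m, ∑ m', Real.exp (∑ v ∈ A m \ A m',
    ∑ y ∈ (A m').biUnion (fun u => typSet P W θ n (c u)), Wn W n (c v) y - t)

lemma penalty_nonneg {V M : Type*} [DecidableEq V] [Fintype M] (A : M → Finset V) (t : ℝ)
    (c : V → Fin n → X) :
    0 ≤ penalty P W θ n A t c := by
  unfold penalty
  positivity

lemma sum_iidW_penalty_le {V M : Type*} [DecidableEq V] [Fintype V] [Fintype M]
    (hW : IsChannel W) (hP : IsPMF P)
    (A : M → Finset V) {N : ℕ} (hA : ∀ m, #(A m) = N) {μ : ℝ}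
    (h1 : ∑ x, iidW P x * ∑ y ∈ (typSet P W θ n x)ᶜ, Wn W n x y ≤ μ)
    (h2 : N * Real.exp (-(n * θ)) ≤ μ) :
    ∑ c : V → Fin n → X, iidW (iidW P) c * penalty P W θ n A (3 * μ * N) c
      ≤ (Fintype.card M + Fintype.card M ^ 2) * Real.exp (-(μ * N)) := by
  have hp0 : ∀ x : Fin n → X, 0 ≤ iidW P x := iidW_nonneg hP.1
  have hp1 : ∑ x : Fin n → X, iidW P x = 1 := sum_iidW hP.2
  have hμ0 : 0 ≤ μ := le_trans (by positivity) h2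
  have hs0 : ∀ (x : Fin n → X) (D : Finset (Fin n → Y)), 0 ≤ ∑ y ∈ D, Wn W n x y :=
    fun x D => sum_nonneg fun _ _ => Wn_nonneg hW _ _
  simp only [penalty, mul_add, sum_add_distrib, mul_sum (s := (univ : Finset M))]
  have e1 : ∑ c : V → Fin n → X, ∑ m, iidW (iidW P) c * Real.exp (∑ v ∈ A m,
      ∑ y ∈ (typSet P W θ n (c v))ᶜ, Wn W n (c v) y - 3 * μ * N)
      ≤ ∑ _m : M, Real.exp (-(μ * N)) := by
    rw [sum_comm]
    refine sum_le_sum fun m _ => ?_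
    exact sum_iidW_exp_le hp0 hp1 (fun _ x => ∑ y ∈ (typSet P W θ n x)ᶜ, Wn W n x y)
      (fun _ _ => hs0 _ _) (fun _ _ => sum_Wn_le_one hW _ _) (fun _ => h1) hμ0 _
      (fun _ _ _ _ => rfl) (hA m).le
  have e2 : ∑ c : V → Fin n → X, ∑ m, ∑ m', iidW (iidW P) c * Real.exp (∑ v ∈ A m \ A m',
      ∑ y ∈ (A m').biUnion (fun u => typSet P W θ n (c u)), Wn W n (c v) y - 3 * μ * N)
      ≤ ∑ _m : M, ∑ _m' : M, Real.exp (-(μ * N)) := by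
    rw [sum_comm]
    refine sum_le_sum fun m _ => ?_
    rw [sum_comm]
    refine sum_le_sum fun m' _ => ?_
    refine sum_iidW_exp_le hp0 hp1
      (fun c x => ∑ y ∈ (A m').biUnion (fun u => typSet P W θ n (c u)), Wn W n x y)
      (fun _ _ => hs0 _ _) (fun _ _ => sum_Wn_le_one hW _ _)
      (fun c => (sum_iidW_biUnion_typSet_le hW hP (A m') c).trans ?_) hμ0 _ ?_
      ((card_le_card sdiff_subset).trans (hA m).le)
    · rw [hA]; exact h2
    · intro v hv c a
      have : (A m').biUnion (fun u => typSet P W θ n (Function.update c v a u))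
          = (A m').biUnion (fun u => typSet P W θ n (c u)) := by
        refine biUnion_congr rfl fun u hu => ?_
        rw [Function.update_of_ne (ne_of_mem_of_not_mem hu (mem_sdiff.1 hv).2)]
      rw [this]
  refine (add_le_add e1 e2).trans (le_of_eq ?_)
  simp only [sum_const, card_univ, nsmul_eq_mul]
  ring

/-- A codebook with small penalty yields an identification code. -/
lemma idCodeErr_of_penalty_lt_one {V M M' : Type*} [DecidableEq V] [Fintype M] [Fintype M']
    (hW : IsChannel W) (A : M → Finset V) {N : ℕ} (hN : 0 < N) {μ ε l : ℝ}
    (hint : ∀ m m', m ≠ m' → (#(A m ∩ A m') : ℝ) ≤ ε * N)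
    (v : M → M' → V)
    (hv : ∀ m (g : V → ℝ), (Fintype.card M' : ℝ)⁻¹ * ∑ m', g (v m m') = (N : ℝ)⁻¹ * ∑ u ∈ A m, g u)
    (c : V → Fin n → X) (hc : penalty P W θ n A (3 * μ * N) c < 1) (hε : 0 ≤ ε)
    (hl : 3 * μ + ε ≤ l) :
    IDCodeErr n W
      (fun m x => (Fintype.card M' : ℝ)⁻¹ * ∑ m', if x = c (v m m') then 1 else 0)
      (fun m => (A m).biUnion fun u => typSet P W θ n (c u)) l l := by
  have hN' : (0 : ℝ) < N := by exact_mod_cast hN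
  have hs0 : ∀ (x : Fin n → X) (D : Finset (Fin n → Y)), 0 ≤ ∑ y ∈ D, Wn W n x y :=
    fun x D => sum_nonneg fun _ _ => Wn_nonneg hW _ _
  have key : ∀ m (G : (Fin n → X) → ℝ),
      ∑ x, ((Fintype.card M' : ℝ)⁻¹ * ∑ m', if x = c (v m m') then (1 : ℝ) else 0) * G x
      = (N : ℝ)⁻¹ * ∑ u ∈ A m, G (c u) := by
    intro m G
    rw [← hv m fun u => G (c u)]
    simp only [mul_assoc, ← mul_sum, sum_mul]
    rw [sum_comm]
    simp
  have hexp : ∀ a : ℝ, Real.exp (a - 3 * μ * N) < 1 → (N : ℝ)⁻¹ * a ≤ 3 * μ := by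
    intro a ha
    rw [Real.exp_lt_one_iff, sub_neg] at ha
    rw [inv_mul_le_iff₀ hN']
    linarith
  unfold penalty at hc
  refine ⟨fun m => ?_, fun m m' hmm => ?_⟩
  · have h1 : Real.exp (∑ v ∈ A m, ∑ y ∈ (typSet P W θ n (c v))ᶜ, Wn W n (c v) y - 3 * μ * N)
        < 1 := by
      refine lt_of_le_of_lt ((single_le_sum
        (f := fun m => Real.exp (∑ v ∈ A m, ∑ y ∈ (typSet P W θ n (c v))ᶜ, Wn W n (c v) y
          - 3 * μ * N)) (fun _ _ => (Real.exp_pos _).le) (mem_univ m)).trans ?_) hc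
      exact le_add_of_nonneg_right (by positivity)
    rw [key m fun x => ∑ y ∈ ((A m).biUnion fun u => typSet P W θ n (c u))ᶜ, Wn W n x y]
    refine le_trans ?_ ((hexp _ h1).trans (by linarith))
    gcongr with u hu
    · exact fun y _ _ => Wn_nonneg hW _ y
    · exact subset_biUnion_of_mem (fun u => typSet P W θ n (c u)) hu
  · have h1 : Real.exp (∑ v ∈ A m \ A m',
        ∑ y ∈ (A m').biUnion (fun u => typSet P W θ n (c u)), Wn W n (c v) y - 3 * μ * N)
        < 1 := by
      refine lt_of_le_of_lt ((single_le_sum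
        (f := fun m' => Real.exp (∑ v ∈ A m \ A m',
          ∑ y ∈ (A m').biUnion (fun u => typSet P W θ n (c u)), Wn W n (c v) y - 3 * μ * N))
        (fun _ _ => (Real.exp_pos _).le) (mem_univ m')).trans ((single_le_sum
        (f := fun m => ∑ m', Real.exp (∑ v ∈ A m \ A m',
          ∑ y ∈ (A m').biUnion (fun u => typSet P W θ n (c u)), Wn W n (c v) y - 3 * μ * N))
        (fun _ _ => by positivity) (mem_univ m)).trans ?_)) hc
      exact le_add_of_nonneg_left (by positivity)
    rw [key m fun x => ∑ y ∈ (A m').biUnion (fun u => typSet P W θ n (c u)), Wn W n x y,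
      ← sum_inter_add_sum_sdiff (A m) (A m'), mul_add]
    have h2 := hexp _ h1
    have h3 : (N : ℝ)⁻¹ * ∑ u ∈ A m ∩ A m',
        ∑ y ∈ (A m').biUnion (fun u => typSet P W θ n (c u)), Wn W n (c u) y ≤ ε := by
      rw [inv_mul_le_iff₀ hN']
      calc _ ≤ ∑ u ∈ A m ∩ A m', (1 : ℝ) := sum_le_sum fun u _ => sum_Wn_le_one hW _ _
        _ = #(A m ∩ A m') := by simp
        _ ≤ _ := by linarith [hint m m' hmm]
    linarith

end Channel

section PolynomialTags

variable {F : Type} [Field F] {d N : ℕ}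

/-- The value at `u` of the polynomial in `N` variables with coefficients `c`. -/
def polyEval (c : (Fin N → Fin (d + 2)) → F) (u : Fin N → F) : F :=
  ∑ e, c e * ∏ i, u i ^ (e i : ℕ)

/-- Evaluation at a point as a homomorphism on coefficients. -/
def polyEvalHom (d : ℕ) (u : Fin N → F) : ((Fin N → Fin (d + 2)) → F) →+ F where
  toFun c := polyEval c u
  map_zero' := by simp [polyEval]
  map_add' c c' := by simp [polyEval, add_mul, sum_add_distrib]

/-- The coefficients of the linear monomials. -/
def linCoef (c : (Fin N → Fin (d + 2)) → F) (k : Fin N) : F := c (Pi.single k 1)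

lemma exists_linCoef_polyEval (s u : Fin N → F) (t : F) :
    ∃ c : (Fin N → Fin (d + 2)) → F, linCoef c = s ∧ polyEval c u = t := by
  have hsingle : ∀ k : Fin N, (Pi.single k 1 : Fin N → Fin (d + 2)) ≠ 0 := fun k h => by
    simpa using congrFun h k
  set c₀ : (Fin N → Fin (d + 2)) → F := fun e => ∑ k, if e = Pi.single k 1 then s k else 0
  set c₁ : (Fin N → Fin (d + 2)) → F := fun e => if e = 0 then t - polyEval c₀ u else 0
  refine ⟨c₀ + c₁, ?_, ?_⟩
  · funext k
    have h : ∀ k', (Pi.single k 1 : Fin N → Fin (d + 2)) = Pi.single k' 1 ↔ k = k' := by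
      intro k'
      refine ⟨fun h => ?_, fun h => by rw [h]⟩
      by_contra hne
      simpa [Pi.single_eq_of_ne hne] using congrFun h k
    simp [linCoef, c₀, c₁, hsingle, h]
  · have h1 : polyEval c₁ u = t - polyEval c₀ u := by
      simp [polyEval, c₁]
    have h2 : polyEval (c₀ + c₁) u = polyEval c₀ u + polyEval c₁ u :=
      (polyEvalHom d u).map_add c₀ c₁
    rw [h2, h1]
    ring

/-- Two distinct polynomials of low degree agree at few points. -/
lemma card_polyEval_eq_le [Fintype F] [DecidableEq F] {c c' : (Fin N → Fin (d + 2)) → F}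
    (hc : c ≠ c') :
    #{u | polyEval c u = polyEval c' u} * Fintype.card F
      ≤ N * (d + 2) * Fintype.card F ^ N := by
  set ex : (Fin N → Fin (d + 2)) → (Fin N →₀ ℕ) := fun e =>
    Finsupp.equivFunOnFinite.symm fun i => (e i : ℕ) with hex
  have hinj : Function.Injective ex := fun e e' h => by
    funext i
    exact Fin.ext (congrFun (Finsupp.equivFunOnFinite.symm.injective h) i)
  set p : MvPolynomial (Fin N) F := ∑ e, MvPolynomial.monomial (ex e) (c e - c' e) with hp
  have heval : ∀ u, MvPolynomial.eval u p = polyEval c u - polyEval c' u := by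
    intro u
    simp only [hp, map_sum, MvPolynomial.eval_monomial, polyEval, ← sum_sub_distrib, ← sub_mul]
    refine sum_congr rfl fun e _ => ?_
    rw [Finsupp.prod_fintype _ _ (by simp)]
    simp [hex]
  have hp0 : p ≠ 0 := by
    obtain ⟨e, he⟩ := Function.ne_iff.1 hc
    intro h0
    have h1 := congrArg (MvPolynomial.coeff (ex e)) h0
    simp only [hp, MvPolynomial.coeff_sum, MvPolynomial.coeff_monomial, hinj.eq_iff,
      MvPolynomial.coeff_zero, sum_ite_eq', mem_univ, if_true] at h1
    exact he (sub_eq_zero.1 h1)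
  have hdeg : ∀ i, p.degreeOf i ≤ d + 2 := by
    intro i
    refine (MvPolynomial.degreeOf_sum_le i univ _).trans (Finset.sup_le fun e _ => ?_)
    rcases eq_or_ne (c e - c' e) 0 with h0 | h0
    · simp [h0]
    · rw [MvPolynomial.degreeOf_monomial_eq _ _ h0]
      exact (e i).2.le
  have hsz := MvPolynomial.schwartz_zippel_sum_degreeOf hp0 (fun _ => (univ : Finset F))
  have hq : (0 : ℚ≥0) < Fintype.card F := by exact_mod_cast Fintype.card_pos
  simp only [heval, sub_eq_zero, Fintype.piFinset_univ, card_univ, prod_const, Fintype.card_fin]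
    at hsz
  have hsum : ∑ i, ((p.degreeOf i : ℚ≥0) / Fintype.card F) ≤ N * (d + 2) / Fintype.card F := by
    calc _ ≤ ∑ _i : Fin N, ((d + 2 : ℚ≥0) / Fintype.card F) := by
          gcongr with i
          exact_mod_cast hdeg i
      _ = _ := by simp [mul_div_assoc]
  have h := hsz.trans hsum
  rw [div_le_div_iff₀ (by positivity) hq] at h
  exact_mod_cast h

end PolynomialTags

/-- A map all of whose fibers are cosets of subgroups of equal index is balanced. -/
lemma average_comp_eq_average {M T H : Type*} [Fintype M] [Nonempty M] [Fintype T] [AddGroup M]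
    [AddGroup H] [Fintype H] (φ : M → T) (h : T → M →+ H) (k : T → H)
    (hφ : ∀ t m, φ m = t ↔ h t m = k t) (hsurj : ∀ t, Function.Surjective (h t)) (g : T → ℝ) :
    (Fintype.card M : ℝ)⁻¹ * ∑ m, g (φ m) = (Fintype.card T : ℝ)⁻¹ * ∑ t, g t := by
  have hfib : ∀ t, (#{m | φ m = t} : ℝ) * Fintype.card H = Fintype.card M := by
    intro t
    have h1 : Fintype.card M = ∑ b : H, #{m | h t m = b} := by
      rw [← card_univ]
      exact card_eq_sum_card_fiberwise (fun _ _ => mem_coe.2 (mem_univ _))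
    have h2 : ∀ b : H, #{m | h t m = b} = #{m | φ m = t} := by
      intro b
      simp only [hφ]
      exact AddMonoidHom.card_fiber_eq_of_mem_range (h t) (hsurj t b) (hsurj t _)
    rw [sum_congr rfl fun b _ => h2 b, sum_const, card_univ, smul_eq_mul] at h1
    rw [h1]
    push_cast
    ring
  have hH : (0 : ℝ) < Fintype.card H := by exact_mod_cast Fintype.card_pos
  have hM : (0 : ℝ) < Fintype.card M := by exact_mod_cast Fintype.card_pos
  have hfib' : ∀ t, (#{m | φ m = t} : ℝ) = Fintype.card M / Fintype.card H :=
    fun t => (eq_div_iff hH.ne').2 (hfib t)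
  have hsum : ∀ g : T → ℝ, ∑ m, g (φ m) = Fintype.card M / Fintype.card H * ∑ t, g t := by
    intro g
    rw [← sum_fiberwise univ φ fun m => g (φ m), mul_sum]
    refine sum_congr rfl fun t _ => ?_
    rw [sum_congr rfl (g := fun _ => g t) fun m hm => by rw [(mem_filter.1 hm).2], sum_const,
      nsmul_eq_mul, hfib']
  have hTH : (Fintype.card T : ℝ) = Fintype.card H := by
    have := hsum fun _ => 1
    simp only [sum_const, card_univ, nsmul_eq_mul, mul_one] at this
    field_simp at this
    linarith
  rw [hsum g, hTH]
  field_simp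

section IndexSystem

variable {F : Type} [Field F] {d r j : ℕ}

/-- The point of `F ^ (r + j)` over `s` on the graph of a vector of polynomials. -/
def liftPoint (b : Fin j → (Fin r → Fin (d + 2)) → F) (s : Fin r → F) : Fin (r + j) → F :=
  Fin.append s fun i => polyEval (b i) s

/-- The index of the codeword sent for a pair of messages. -/
def crossIndex (i₀ : Fin j) (a : (Fin (r + j) → Fin (d + 2)) → F)
    (b : Fin j → (Fin r → Fin (d + 2)) → F) : (Fin (r + j) → F) × F :=
  let u := liftPoint b fun k => linCoef a (Fin.castAdd j k) + linCoef (b i₀) k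
  (u, polyEval a u)

lemma liftPoint_eq_iff (b : Fin j → (Fin r → Fin (d + 2)) → F) (s : Fin r → F)
    (u : Fin (r + j) → F) :
    liftPoint b s = u ↔
      s = (fun k => u (Fin.castAdd j k)) ∧
        ∀ i, polyEval (b i) (fun k => u (Fin.castAdd j k)) = u (Fin.natAdd r i) := by
  constructor
  · rintro rfl
    simp [liftPoint]
  · rintro ⟨rfl, h⟩
    funext x
    induction x using Fin.addCases <;> simp [liftPoint, h]

lemma liftPoint_injective (b : Fin j → (Fin r → Fin (d + 2)) → F) :
    Function.Injective (liftPoint b) := fun s s' h => by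
  rw [((liftPoint_eq_iff b s _).1 h).1]
  simp [liftPoint]

lemma graph_injective (a : (Fin (r + j) → Fin (d + 2)) → F) :
    Function.Injective fun u : Fin (r + j) → F => (u, polyEval a u) :=
  fun _ _ h => congrArg Prod.fst h

lemma cylinder_injective (b : Fin j → (Fin r → Fin (d + 2)) → F) :
    Function.Injective fun p : (Fin r → F) × F => (liftPoint b p.1, p.2) :=
  fun _ _ h => Prod.ext (liftPoint_injective b (congrArg Prod.fst h)) (Prod.mk.inj h).2

variable [Fintype F] [DecidableEq F]

/-- The first receiver's decoding set: the graph of a polynomial. -/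
def rowSet (a : (Fin (r + j) → Fin (d + 2)) → F) : Finset ((Fin (r + j) → F) × F) :=
  univ.image fun u => (u, polyEval a u)

/-- The second receiver's decoding set: the cylinder over the graph of a vector of polynomials. -/
def colSet (b : Fin j → (Fin r → Fin (d + 2)) → F) : Finset ((Fin (r + j) → F) × F) :=
  univ.image fun p : (Fin r → F) × F => (liftPoint b p.1, p.2)

lemma card_rowSet (a : (Fin (r + j) → Fin (d + 2)) → F) :
    #(rowSet a) = Fintype.card F ^ (r + j) := by
  rw [rowSet, card_image_of_injective _ (graph_injective a)]
  simp

lemma card_colSet (b : Fin j → (Fin r → Fin (d + 2)) → F) :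
    #(colSet b) = Fintype.card F ^ (r + 1) := by
  rw [colSet, card_image_of_injective _ (cylinder_injective b)]
  simp [pow_succ]

lemma card_rowSet_inter_le {a a' : (Fin (r + j) → Fin (d + 2)) → F} (h : a ≠ a') :
    #(rowSet a ∩ rowSet a') * Fintype.card F
      ≤ (r + j) * (d + 2) * Fintype.card F ^ (r + j) := by
  refine le_trans (Nat.mul_le_mul_right _ ?_) (card_polyEval_eq_le h)
  rw [← card_image_of_injective _ (graph_injective a)]
  refine card_le_card fun x hx => ?_
  simp only [rowSet, mem_inter, mem_image, mem_univ, true_and] at hx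
  obtain ⟨⟨u, rfl⟩, u', hu'⟩ := hx
  obtain rfl : u' = u := congrArg Prod.fst hu'
  exact mem_image_of_mem _ (mem_filter.2 ⟨mem_univ _, (congrArg Prod.snd hu').symm⟩)

lemma card_colSet_inter_le {b b' : Fin j → (Fin r → Fin (d + 2)) → F} (h : b ≠ b') :
    #(colSet b ∩ colSet b') * Fintype.card F
      ≤ r * (d + 2) * Fintype.card F ^ (r + 1) := by
  obtain ⟨i, hi⟩ := Function.ne_iff.1 h
  have h1 : #(colSet b ∩ colSet b') ≤
      #{u | polyEval (b i) u = polyEval (b' i) u} * Fintype.card F := by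
    rw [← card_univ (α := F), ← card_product, ← card_image_of_injective _ (cylinder_injective b)]
    refine card_le_card fun x hx => ?_
    simp only [colSet, mem_inter, mem_image, mem_univ, true_and] at hx
    obtain ⟨⟨p, rfl⟩, p', hp'⟩ := hx
    refine mem_image_of_mem _ (mem_product.2 ⟨mem_filter.2 ⟨mem_univ _, ?_⟩, mem_univ _⟩)
    have h2 := (liftPoint_eq_iff b' p'.1 _).1 (congrArg Prod.fst hp')
    have h3 := h2.2 i
    simp only [liftPoint, Fin.append_left, Fin.append_right] at h3
    exact h3.symm
  calc _ ≤ #{u | polyEval (b i) u = polyEval (b' i) u} * Fintype.card F * Fintype.card F :=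
        Nat.mul_le_mul_right _ h1
    _ ≤ r * (d + 2) * Fintype.card F ^ r * Fintype.card F :=
        Nat.mul_le_mul_right _ (card_polyEval_eq_le hi)
    _ = _ := by ring

/-- For a fixed row the codeword index is uniformly distributed on the row's decoding set. -/
lemma average_crossIndex_row (i₀ : Fin j) (a : (Fin (r + j) → Fin (d + 2)) → F)
    (g : (Fin (r + j) → F) × F → ℝ) :
    (Fintype.card (Fin j → (Fin r → Fin (d + 2)) → F) : ℝ)⁻¹ * ∑ b, g (crossIndex i₀ a b)
      = ((Fintype.card F ^ (r + j) : ℕ) : ℝ)⁻¹ * ∑ x ∈ rowSet a, g x := by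
  rw [rowSet, sum_image fun _ _ _ _ h => graph_injective a h]
  have := average_comp_eq_average
    (φ := fun b : Fin j → (Fin r → Fin (d + 2)) → F =>
      liftPoint b fun k => linCoef a (Fin.castAdd j k) + linCoef (b i₀) k)
    (H := (Fin r → F) × (Fin j → F))
    (h := fun u =>
      { toFun := fun b => (linCoef (b i₀),
          fun i => polyEvalHom d (fun k => u (Fin.castAdd j k)) (b i))
        map_zero' := by ext <;> simp [linCoef]
        map_add' := fun b b' => by ext <;> simp [linCoef] })
    (k := fun u => (fun k => u (Fin.castAdd j k) - linCoef a (Fin.castAdd j k),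
      fun i => u (Fin.natAdd r i)))
    (fun u b => by
      rw [liftPoint_eq_iff]
      simp only [AddMonoidHom.coe_mk, ZeroHom.coe_mk, Prod.mk.injEq, funext_iff, eq_sub_iff_add_eq']
      rfl) ?_ (fun u => g (u, polyEval a u))
  · simpa [crossIndex] using this
  · rintro u ⟨s, t⟩
    choose c hc1 hc2 using fun i => exists_linCoef_polyEval (d := d) s
      (fun k => u (Fin.castAdd j k)) (t i)
    exact ⟨c, Prod.ext (hc1 i₀) (funext hc2)⟩

/-- For a fixed column the codeword index is uniformly distributed on the column's decoding
set. -/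
lemma average_crossIndex_col (i₀ : Fin j) (b : Fin j → (Fin r → Fin (d + 2)) → F)
    (g : (Fin (r + j) → F) × F → ℝ) :
    (Fintype.card ((Fin (r + j) → Fin (d + 2)) → F) : ℝ)⁻¹ * ∑ a, g (crossIndex i₀ a b)
      = ((Fintype.card F ^ (r + 1) : ℕ) : ℝ)⁻¹ * ∑ x ∈ colSet b, g x := by
  rw [colSet, sum_image fun _ _ _ _ h => cylinder_injective b h]
  have := average_comp_eq_average
    (φ := fun a : (Fin (r + j) → Fin (d + 2)) → F =>
      ((fun k => linCoef a (Fin.castAdd j k) + linCoef (b i₀) k : Fin r → F),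
        (crossIndex i₀ a b).2))
    (H := (Fin r → F) × F)
    (h := fun p =>
      { toFun := fun a => (fun k => linCoef a (Fin.castAdd j k), polyEvalHom d (liftPoint b p.1) a)
        map_zero' := by ext <;> simp [linCoef]
        map_add' := fun a a' => by ext <;> simp [linCoef] })
    (k := fun p => (fun k => p.1 k - linCoef (b i₀) k, p.2))
    (fun p a => by
      obtain ⟨s, l⟩ := p
      simp only [AddMonoidHom.coe_mk, ZeroHom.coe_mk, Prod.mk.injEq, eq_sub_iff_add_eq,
        funext_iff, crossIndex]
      refine and_congr_right fun hs => ?_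
      rw [funext hs]
      rfl) ?_
    (fun p => g (liftPoint b p.1, p.2))
  · simpa [crossIndex, pow_succ] using this
  · rintro p ⟨s, t⟩
    obtain ⟨c, hc1, hc2⟩ := exists_linCoef_polyEval (d := d) (Fin.append s fun _ => 0)
      (liftPoint b p.1) t
    refine ⟨c, Prod.ext (funext fun k => ?_) hc2⟩
    simpa using congrFun hc1 (Fin.castAdd j k)

end IndexSystem

/-- A rectangular array of codeword indices in which every row and every column visits a small
set uniformly, while distinct rows, and distinct columns, visit almost disjoint sets. -/
lemma exists_index_array {q : ℕ} (hq : q.Prime) (d r j : ℕ) (hj : 0 < j) :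
    ∃ (V : Type) (_ : Fintype V) (_ : DecidableEq V) (kY kZ : ℕ) (A : Fin kY → Finset V)
      (B : Fin kZ → Finset V) (v : Fin kY → Fin kZ → V),
      kY = q ^ (d + 2) ^ (r + j) ∧ kZ = q ^ (j * (d + 2) ^ r) ∧
      (∀ m, #(A m) = q ^ (r + j)) ∧ (∀ m, #(B m) = q ^ (r + 1)) ∧
      (∀ m m', m ≠ m' → #(A m ∩ A m') * q ≤ (r + j) * (d + 2) * q ^ (r + j)) ∧
      (∀ m m', m ≠ m' → #(B m ∩ B m') * q ≤ r * (d + 2) * q ^ (r + 1)) ∧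
      (∀ m (g : V → ℝ), (kZ : ℝ)⁻¹ * ∑ m', g (v m m')
        = ((q ^ (r + j) : ℕ) : ℝ)⁻¹ * ∑ u ∈ A m, g u) ∧
      (∀ m' (g : V → ℝ), (kY : ℝ)⁻¹ * ∑ m, g (v m m')
        = ((q ^ (r + 1) : ℕ) : ℝ)⁻¹ * ∑ u ∈ B m', g u) := by
  have := Fact.mk hq
  set eY := (Fintype.equivFin ((Fin (r + j) → Fin (d + 2)) → ZMod q)).symm
  set eZ := (Fintype.equivFin (Fin j → (Fin r → Fin (d + 2)) → ZMod q)).symm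
  have hF := ZMod.card q
  refine ⟨(Fin (r + j) → ZMod q) × ZMod q, inferInstance, inferInstance, _, _,
    fun m => rowSet (eY m), fun m => colSet (eZ m),
    fun m m' => crossIndex ⟨0, hj⟩ (eY m) (eZ m'), ?_, ?_, fun m => ?_, fun m => ?_,
    fun m m' h => ?_, fun m m' h => ?_, fun m g => ?_, fun m g => ?_⟩
  · simp
  · simp [← pow_mul, mul_comm]
  · rw [card_rowSet, hF]
  · rw [card_colSet, hF]
  · simpa only [hF] using card_rowSet_inter_le (eY.injective.ne h)
  · simpa only [hF] using card_colSet_inter_le (eZ.injective.ne h)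
  · rw [eZ.sum_comp fun b => g (crossIndex ⟨0, hj⟩ (eY m) b), average_crossIndex_row, hF]
  · rw [eY.sum_comp fun a => g (crossIndex ⟨0, hj⟩ a (eZ m)), average_crossIndex_col, hF]

lemma exists_forall_add_mul_le_exp (a b : ℝ) {c : ℝ} (hc : 0 < c) :
    ∃ n₀ : ℕ, ∀ n : ℕ, n₀ ≤ n → a + b * n ≤ Real.exp (n * c) := by
  obtain ⟨k, hk⟩ := exists_nat_ge (2 * (|a| + |b|) / c ^ 2)
  refine ⟨max k 1, fun n hn => ?_⟩
  have h1 : (1 : ℝ) ≤ n := by exact_mod_cast (le_max_right k 1).trans hn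
  have h2 : 2 * (|a| + |b|) / c ^ 2 ≤ n := hk.trans (by exact_mod_cast (le_max_left k 1).trans hn)
  rw [div_le_iff₀ (by positivity)] at h2
  have h3 := Real.quadratic_le_exp_of_nonneg (show 0 ≤ n * c by positivity)
  have h4 : 2 * (|a| + |b|) * n ≤ n * c ^ 2 * n := by gcongr
  have h5 : |a| * 1 ≤ |a| * n := by gcongr
  have h6 : b * n ≤ |b| * n := by gcongr; exact le_abs_self b
  have h7 : 0 ≤ n * c := by positivity
  nlinarith [le_abs_self a]

/-- The size estimates for one receiver: `D` bounds the degrees, `q` is the field size, `N` is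
the number of variables of the polynomials and `q ^ K` is the size of the decoding sets. -/
lemma exists_forall_size_estimates {α β θ τ : ℝ} {N K c : ℕ} (hα : 0 < α) (hN : 1 ≤ N)
    (hNK : N ≤ K) (hc : 1 ≤ c) (hτ : 0 < τ) (hαβ : 2 * τ ≤ β - α) (hθ : 2 * τ ≤ θ - β * K) :
    ∃ n₀ : ℕ, ∀ n : ℕ, n₀ ≤ n → ∀ D q : ℕ, Real.exp (n * α) ≤ D → D ≤ 4 * Real.exp (n * α) →
      Real.exp (n * β) ≤ q → q ≤ 4 * Real.exp (n * β) →
      ((q ^ K : ℕ) : ℝ) * Real.exp (-(n * θ)) ≤ Real.exp (-(n * τ)) ∧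
      (((q ^ (c * D ^ N) : ℕ) : ℝ) + ((q ^ (c * D ^ N) : ℕ) : ℝ) ^ 2) *
        Real.exp (-(Real.exp (-(n * τ)) * (q ^ K : ℕ))) < 1 / 2 ∧
      3 * Real.exp (-(n * τ)) + N * D / q ≤ Real.exp (-(n * (τ / 2))) ∧
      α * N ≤ (1 / n) * Real.log (Real.log (q ^ (c * D ^ N) : ℕ)) := by
  have hβ : 0 < β := by linarith
  obtain ⟨n₁, h₁⟩ := exists_forall_add_mul_le_exp (4 ^ K) 0 hτ
  obtain ⟨n₂, h₂⟩ := exists_forall_add_mul_le_exp (2 * c * 4 ^ N * 2 + 2) (2 * c * 4 ^ N * β) hτ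
  obtain ⟨n₃, h₃⟩ := exists_forall_add_mul_le_exp (3 + 4 * N) 0 (half_pos hτ)
  obtain ⟨n₄, h₄⟩ := exists_nat_ge (1 / β)
  refine ⟨max (max n₁ n₂) (max n₃ (max n₄ 1)), fun n hn D q hD1 hD2 hq1 hq2 => ?_⟩
  simp only [max_le_iff] at hn
  obtain ⟨⟨hn1, hn2⟩, hn3, hn4, hn5⟩ := hn
  have hn0 : (0 : ℝ) < n := by exact_mod_cast hn5
  have hq0 : (0 : ℝ) < q := (Real.exp_pos _).trans_le hq1
  have hD0 : (0 : ℝ) < D := (Real.exp_pos _).trans_le hD1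
  have hnβ : 1 ≤ n * β := by
    have : 1 / β ≤ n := h₄.trans (by exact_mod_cast hn4)
    rwa [div_le_iff₀ hβ] at this
  have hlq1 : 1 ≤ Real.log q := hnβ.trans ((Real.le_log_iff_exp_le hq0).2 hq1)
  have hlog4 : Real.log 4 ≤ 2 := by
    rw [Real.log_le_iff_le_exp (by norm_num)]
    have := Real.quadratic_le_exp_of_nonneg (show (0 : ℝ) ≤ 2 by norm_num)
    linarith
  have hlq2 : Real.log q ≤ 2 + n * β := by
    calc Real.log q ≤ Real.log (4 * Real.exp (n * β)) := Real.log_le_log hq0 hq2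
      _ = Real.log 4 + n * β := by
        rw [Real.log_mul (by norm_num) (Real.exp_pos _).ne', Real.log_exp]
      _ ≤ _ := by linarith
  have hlk : Real.log (q ^ (c * D ^ N) : ℕ) = c * D ^ N * Real.log q := by
    push_cast
    rw [Real.log_pow]
    push_cast
    ring
  have hk0 : (0 : ℝ) < (q ^ (c * D ^ N) : ℕ) := by push_cast; positivity
  refine ⟨?_, ?_, ?_, ?_⟩
  · have h := h₁ n hn1
    rw [zero_mul, add_zero] at h
    calc ((q ^ K : ℕ) : ℝ) * Real.exp (-(n * θ))
        ≤ (4 * Real.exp (n * β)) ^ K * Real.exp (-(n * θ)) := by push_cast; gcongr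
      _ = 4 ^ K * Real.exp (K * (n * β) - n * θ) := by
          rw [mul_pow, ← Real.exp_nat_mul, mul_assoc, ← Real.exp_add, ← sub_eq_add_neg]
      _ ≤ Real.exp (n * τ) * Real.exp (K * (n * β) - n * θ) := by gcongr
      _ = Real.exp (n * τ + (K * (n * β) - n * θ)) := (Real.exp_add _ _).symm
      _ ≤ _ := by
          apply Real.exp_le_exp.2
          nlinarith
  · have h := h₂ n hn2
    have key : 2 * Real.log (q ^ (c * D ^ N) : ℕ) + 2 ≤ Real.exp (-(n * τ)) * (q ^ K : ℕ) := by
      rw [hlk]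
      calc 2 * (c * D ^ N * Real.log q) + 2
          ≤ 2 * (c * (4 * Real.exp (n * α)) ^ N * (2 + n * β)) + 2 * Real.exp (N * (n * α)) := by
            gcongr
            exact le_mul_of_one_le_right (by norm_num) (Real.one_le_exp (by positivity))
        _ = (2 * c * 4 ^ N * 2 + 2 + 2 * c * 4 ^ N * β * n) * Real.exp (N * (n * α)) := by
            rw [mul_pow, ← Real.exp_nat_mul]
            ring
        _ ≤ Real.exp (n * τ) * Real.exp (N * (n * α)) := by gcongr
        _ = Real.exp (n * τ + N * (n * α)) := (Real.exp_add _ _).symm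
        _ ≤ Real.exp (-(n * τ) + N * (n * β)) := by
            apply Real.exp_le_exp.2
            have hN' : (1 : ℝ) ≤ N := by exact_mod_cast hN
            have h1 : n * (2 * τ) ≤ n * (β - α) := by gcongr
            have h2 : 1 * (n * (β - α)) ≤ N * (n * (β - α)) := by
              have : 0 ≤ n * (β - α) := le_trans (by positivity) h1
              gcongr
            linarith
        _ = Real.exp (-(n * τ)) * Real.exp (n * β) ^ N := by
            rw [Real.exp_add, Real.exp_nat_mul]
        _ ≤ Real.exp (-(n * τ)) * Real.exp (n * β) ^ K := by
            gcongr
            exact Real.one_le_exp (by positivity)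
        _ ≤ _ := by push_cast; gcongr
    set k : ℝ := ((q ^ (c * D ^ N) : ℕ) : ℝ)
    have hk1 : 1 ≤ k := by
      have : (1 : ℕ) ≤ q ^ (c * D ^ N) := Nat.one_le_pow _ _ (by exact_mod_cast hq0)
      exact Nat.one_le_cast.2 this
    calc (k + k ^ 2) * Real.exp (-(Real.exp (-(n * τ)) * (q ^ K : ℕ)))
        ≤ (2 * k ^ 2) * Real.exp (-(2 * Real.log k + 2)) := by
          gcongr
          nlinarith
      _ = 2 * Real.exp (-2) := by
          have : Real.exp (2 * Real.log k) = k ^ 2 := by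
            rw [← Real.log_rpow hk0, Real.exp_log (by positivity)]
            norm_cast
          rw [neg_add, Real.exp_add, Real.exp_neg (2 * Real.log k), this]
          field_simp
      _ < 1 / 2 := by
          have : 4 < Real.exp 2 := by
            have := Real.quadratic_le_exp_of_nonneg (show (0 : ℝ) ≤ 2 by norm_num)
            linarith
          rw [Real.exp_neg, ← div_eq_mul_inv, div_lt_div_iff₀ (Real.exp_pos _) (by norm_num)]
          linarith
  · have h := h₃ n hn3
    rw [zero_mul, add_zero] at h
    have h1 : (N : ℝ) * D / q ≤ 4 * N * Real.exp (-(n * τ)) := by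
      rw [div_le_iff₀ hq0]
      calc (N : ℝ) * D ≤ N * (4 * Real.exp (n * α)) := by gcongr
        _ ≤ N * (4 * Real.exp (-(n * τ) + n * β)) := by
            gcongr
            nlinarith
        _ = 4 * N * Real.exp (-(n * τ)) * Real.exp (n * β) := by rw [Real.exp_add]; ring
        _ ≤ _ := by gcongr
    calc _ ≤ (3 + 4 * N) * Real.exp (-(n * τ)) := by linarith
      _ ≤ Real.exp (n * (τ / 2)) * Real.exp (-(n * τ)) := by gcongr
      _ = _ := by rw [← Real.exp_add]; congr 1; ring
  · rw [one_div, ← div_eq_inv_mul, le_div_iff₀ hn0, hlk]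
    have hc' : (1 : ℝ) ≤ c := by exact_mod_cast hc
    rw [Real.le_log_iff_exp_le (by positivity)]
    calc Real.exp (α * N * n) = Real.exp (n * α) ^ N := by
          rw [← Real.exp_nat_mul]; congr 1; ring
      _ ≤ D ^ N := by gcongr
      _ = 1 * D ^ N * 1 := by ring
      _ ≤ c * D ^ N * Real.log q := by gcongr

lemma exists_rate_parameters {RY RZ IY IZ : ℝ} (hRZ0 : 0 < RZ) (hle : RZ ≤ RY) (hRY : RY < IY)
    (hRZ : RZ < IZ) :
    ∃ (r j : ℕ) (α β : ℝ), 1 ≤ r ∧ 1 ≤ j ∧ 0 < α ∧ α < β ∧ RZ ≤ α * r ∧ RY ≤ α * (r + j : ℕ) ∧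
      β * (r + 1 : ℕ) < IZ ∧ β * (r + j : ℕ) < IY := by
  set δ := min (IY - RY) (IZ - RZ) with hδ
  have hδ0 : 0 < δ := lt_min (by linarith) (by linarith)
  obtain ⟨r, hr⟩ := exists_nat_gt (max 1 (RZ / (δ / 2)))
  have hr1 : (1 : ℝ) < r := (le_max_left _ _).trans_lt hr
  have hr0 : (0 : ℝ) < r := by linarith
  have hr2 : RZ / (δ / 2) < r := (le_max_right _ _).trans_lt hr
  rw [div_lt_iff₀ (by positivity)] at hr2
  set α := RZ / r with hα
  have hα0 : 0 < α := by positivity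
  have hαr : α * r = RZ := by rw [hα]; field_simp
  have hαδ : α < δ / 2 := by
    rw [hα, div_lt_iff₀ hr0]; linarith
  set j := ⌊(RY - RZ) / α⌋₊ + 1 with hj
  have hj1 : (RY - RZ) / α < j := by rw [hj]; push_cast; exact Nat.lt_floor_add_one _
  have hj2 : (j : ℝ) ≤ (RY - RZ) / α + 1 := by
    rw [hj]; push_cast
    gcongr
    exact Nat.floor_le (div_nonneg (by linarith) hα0.le)
  rw [div_lt_iff₀ hα0] at hj1
  have hj3 : α * j ≤ RY - RZ + α := by
    calc α * j ≤ α * ((RY - RZ) / α + 1) := by gcongr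
      _ = _ := by field_simp
  have hj0 : (1 : ℝ) ≤ j := by
    rw [hj]; push_cast; linarith [Nat.cast_nonneg (α := ℝ) ⌊(RY - RZ) / α⌋₊]
  set η := δ / (4 * (r + j)) with hη
  have hη0 : 0 < η := by positivity
  have hηrj : η * (r + j) = δ / 4 := by rw [hη]; field_simp
  have hδY : δ ≤ IY - RY := min_le_left _ _
  have hδZ : δ ≤ IZ - RZ := min_le_right _ _
  refine ⟨r, j, α, α + η, by exact_mod_cast hr1.le, Nat.le_add_left _ _, hα0, by linarith,
    hαr.ge, ?_, ?_, ?_⟩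
  · push_cast; nlinarith
  · push_cast; nlinarith
  · push_cast; nlinarith

lemma exists_field_and_degree {α β : ℝ} (hα : 0 < α) (hβ : 0 < β) (n : ℕ) :
    ∃ d q : ℕ, q.Prime ∧ Real.exp (n * α) ≤ (d + 2 : ℕ) ∧ (d + 2 : ℕ) ≤ 4 * Real.exp (n * α) ∧
      Real.exp (n * β) ≤ q ∧ q ≤ 4 * Real.exp (n * β) := by
  have h1 : 1 ≤ Real.exp (n * α) := Real.one_le_exp (by positivity)
  have h2 : 1 ≤ Real.exp (n * β) := Real.one_le_exp (by positivity)
  have h3 := Nat.le_ceil (Real.exp (n * β))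
  have h4 := Nat.ceil_lt_add_one (Real.exp_pos (n * β)).le
  have h5 := Nat.le_ceil (Real.exp (n * α))
  have h6 := Nat.ceil_lt_add_one (Real.exp_pos (n * α)).le
  obtain ⟨q, hq, hq1, hq2⟩ := Nat.exists_prime_lt_and_le_two_mul ⌈Real.exp (n * β)⌉₊
    (Nat.ceil_pos.2 (Real.exp_pos _)).ne'
  have hq1' : (⌈Real.exp (n * β)⌉₊ : ℝ) < q := by exact_mod_cast hq1
  have hq2' : (q : ℝ) ≤ 2 * ⌈Real.exp (n * β)⌉₊ := by exact_mod_cast hq2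
  refine ⟨⌈Real.exp (n * α)⌉₊, q, hq, ?_, ?_, ?_, ?_⟩ <;> push_cast <;> linarith

lemma inter_card_le_of_mul_le {a q s N D : ℕ} (hq : 0 < q) (h : a * q ≤ N * D * s) :
    (a : ℝ) ≤ (N * D / q : ℝ) * s := by
  have hq' : (0 : ℝ) < q := by exact_mod_cast hq
  have h' : (a : ℝ) * q ≤ N * D * s := by exact_mod_cast h
  rw [div_mul_eq_mul_div, le_div_iff₀ hq']
  exact h'

/-- The direct part for two channels with a common input, when the first rate is the larger. -/
lemma exists_codeword_array_of_le {X Y Z : Type*} [Fintype X] [Fintype Y] [Fintype Z]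
    {WY : X → Y → ℝ} {WZ : X → Z → ℝ} (hWY : IsChannel WY) (hWZ : IsChannel WZ)
    {P : X → ℝ} (hP : IsPMF P) {RY RZ : ℝ} (hRY : RY < mutInf P WY)
    (hRZ0 : 0 < RZ) (hRZ : RZ < mutInf P WZ) (hle : RZ ≤ RY) :
    ∃ τ : ℝ, 0 < τ ∧ ∃ n₀ : ℕ, ∀ n : ℕ, n₀ ≤ n →
      ∃ (kY kZ : ℕ) (w : Fin kY → Fin kZ → Fin n → X)
        (DY : Fin kY → Finset (Fin n → Y)) (DZ : Fin kZ → Finset (Fin n → Z)),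
        IDCodeErr n WY (fun m x => (kZ : ℝ)⁻¹ * ∑ m', if x = w m m' then 1 else 0) DY
          (Real.exp (-(n * τ))) (Real.exp (-(n * τ))) ∧
        IDCodeErr n WZ (fun m' x => (kY : ℝ)⁻¹ * ∑ m, if x = w m m' then 1 else 0) DZ
          (Real.exp (-(n * τ))) (Real.exp (-(n * τ))) ∧
        RY ≤ (1 / n) * Real.log (Real.log kY) ∧ RZ ≤ (1 / n) * Real.log (Real.log kZ) := by
  obtain ⟨r, j, α, β, hr, hj, hα, hαβ, hRZα, hRYα, hβZ, hβY⟩ :=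
    exists_rate_parameters hRZ0 hle hRY hRZ
  obtain ⟨θY, hθY1, hθY2⟩ := exists_between hβY
  obtain ⟨θZ, hθZ1, hθZ2⟩ := exists_between hβZ
  obtain ⟨γY, hγY, hmissY⟩ := exists_sum_compl_typSet_le hWY hP hθY2
  obtain ⟨γZ, hγZ, hmissZ⟩ := exists_sum_compl_typSet_le hWZ hP hθZ2
  obtain ⟨τ, hτ0, hτ1, hτ2, hτ3, hτ4, hτ5⟩ : ∃ τ : ℝ, 0 < τ ∧ τ ≤ γY ∧ τ ≤ γZ ∧
      2 * τ ≤ β - α ∧ 2 * τ ≤ θY - β * (r + j : ℕ) ∧ 2 * τ ≤ θZ - β * (r + 1 : ℕ) := by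
    have hpos : 0 < min (min γY γZ) (min (β - α) (min (θY - β * (r + j : ℕ))
        (θZ - β * (r + 1 : ℕ)))) :=
      lt_min (lt_min hγY hγZ) (lt_min (by linarith) (lt_min (by linarith) (by linarith)))
    obtain ⟨t, ht⟩ : ∃ t, t = min (min γY γZ) (min (β - α) (min (θY - β * (r + j : ℕ))
        (θZ - β * (r + 1 : ℕ)))) := ⟨_, rfl⟩
    rw [← ht] at hpos
    have h := ht.le
    simp only [le_min_iff] at h
    refine ⟨t / 2, ?_, ?_, ?_, ?_, ?_, ?_⟩ <;> linarith
  obtain ⟨n₁, hn₁⟩ := exists_forall_size_estimates (N := r + j) (K := r + j) (c := 1) hα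
    (by omega) le_rfl le_rfl hτ0 hτ3 hτ4
  obtain ⟨n₂, hn₂⟩ := exists_forall_size_estimates (N := r) (K := r + 1) (c := j) hα
    hr (Nat.le_succ r) hj hτ0 hτ3 hτ5
  refine ⟨τ / 2, half_pos hτ0, max n₁ n₂, fun n hn => ?_⟩
  obtain ⟨d, q, hq, hd1, hd2, hq1, hq2⟩ := exists_field_and_degree hα (hα.trans hαβ) n
  obtain ⟨hY1, hY2, hY3, hY4⟩ :=
    hn₁ n ((le_max_left _ _).trans hn) (d + 2) q hd1 hd2 hq1 hq2
  obtain ⟨hZ1, hZ2, hZ3, hZ4⟩ :=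
    hn₂ n ((le_max_right _ _).trans hn) (d + 2) q hd1 hd2 hq1 hq2
  obtain ⟨V, _, _, kY, kZ, A, B, v, hkY, hkZ, hA, hB, hAi, hBi, hvA, hvB⟩ :=
    exists_index_array hq d r j hj
  rw [one_mul, ← hkY] at hY2 hY4
  rw [← hkZ] at hZ2 hZ4
  set μ := Real.exp (-(n * τ)) with hμ
  have hμY : Real.exp (-(n * γY)) ≤ μ := by rw [hμ]; gcongr
  have hμZ : Real.exp (-(n * γZ)) ≤ μ := by rw [hμ]; gcongr
  have hEY := sum_iidW_penalty_le (θ := θY) (n := n) hWY hP A hA ((hmissY n).trans hμY) hY1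
  have hEZ := sum_iidW_penalty_le (θ := θZ) (n := n) hWZ hP B hB ((hmissZ n).trans hμZ) hZ1
  rw [Fintype.card_fin] at hEY hEZ
  obtain ⟨c, hc⟩ : ∃ c : V → Fin n → X,
      penalty P WY θY n A (3 * μ * (q ^ (r + j) : ℕ)) c
        + penalty P WZ θZ n B (3 * μ * (q ^ (r + 1) : ℕ)) c < 1 := by
    by_contra! hcon
    have hp0 : ∀ x : Fin n → X, 0 ≤ iidW P x := iidW_nonneg hP.1
    have h1 : ∑ c : V → Fin n → X, iidW (iidW P) c * 1 ≤ ∑ c : V → Fin n → X, iidW (iidW P) c *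
        (penalty P WY θY n A (3 * μ * (q ^ (r + j) : ℕ)) c
          + penalty P WZ θZ n B (3 * μ * (q ^ (r + 1) : ℕ)) c) :=
      sum_le_sum fun c _ => mul_le_mul_of_nonneg_left (hcon c) (iidW_nonneg hp0 c)
    simp only [mul_one, sum_iidW (sum_iidW (V := Fin n) hP.2), mul_add, sum_add_distrib] at h1
    linarith
  have hcY := penalty_nonneg (P := P) (W := WY) (θ := θY) A (3 * μ * (q ^ (r + j) : ℕ)) c
  have hcZ := penalty_nonneg (P := P) (W := WZ) (θ := θZ) B (3 * μ * (q ^ (r + 1) : ℕ)) c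
  have hcodeY := idCodeErr_of_penalty_lt_one hWY A (pow_pos hq.pos (r + j))
    (fun m m' h => inter_card_le_of_mul_le hq.pos (hAi m m' h)) v
    (fun m g => by rw [Fintype.card_fin]; exact hvA m g) c (by linarith) (by positivity) hY3
  have hcodeZ := idCodeErr_of_penalty_lt_one hWZ B (pow_pos hq.pos (r + 1))
    (fun m m' h => inter_card_le_of_mul_le hq.pos (hBi m m' h)) (fun m' m => v m m')
    (fun m g => by rw [Fintype.card_fin]; exact hvB m g) c (by linarith) (by positivity) hZ3
  rw [Fintype.card_fin] at hcodeY hcodeZ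
  exact ⟨kY, kZ, fun m m' => c (v m m'), _, _, hcodeY, hcodeZ, hRYα.trans hY4, hRZα.trans hZ4⟩

/-- The direct part for two channels with a common input. -/
lemma exists_codeword_array {X Y Z : Type*} [Fintype X] [Fintype Y] [Fintype Z]
    {WY : X → Y → ℝ} {WZ : X → Z → ℝ} (hWY : IsChannel WY) (hWZ : IsChannel WZ)
    {P : X → ℝ} (hP : IsPMF P) {RY RZ : ℝ} (hRY0 : 0 < RY) (hRY : RY < mutInf P WY)
    (hRZ0 : 0 < RZ) (hRZ : RZ < mutInf P WZ) :
    ∃ τ : ℝ, 0 < τ ∧ ∃ n₀ : ℕ, ∀ n : ℕ, n₀ ≤ n →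
      ∃ (kY kZ : ℕ) (w : Fin kY → Fin kZ → Fin n → X)
        (DY : Fin kY → Finset (Fin n → Y)) (DZ : Fin kZ → Finset (Fin n → Z)),
        IDCodeErr n WY (fun m x => (kZ : ℝ)⁻¹ * ∑ m', if x = w m m' then 1 else 0) DY
          (Real.exp (-(n * τ))) (Real.exp (-(n * τ))) ∧
        IDCodeErr n WZ (fun m' x => (kY : ℝ)⁻¹ * ∑ m, if x = w m m' then 1 else 0) DZ
          (Real.exp (-(n * τ))) (Real.exp (-(n * τ))) ∧
        RY ≤ (1 / n) * Real.log (Real.log kY) ∧ RZ ≤ (1 / n) * Real.log (Real.log kZ) := by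
  rcases le_total RZ RY with hle | hle
  · exact exists_codeword_array_of_le hWY hWZ hP hRY hRZ0 hRZ hle
  · obtain ⟨τ, hτ, n₀, h⟩ := exists_codeword_array_of_le hWZ hWY hP hRZ hRY0 hRY hle
    refine ⟨τ, hτ, n₀, fun n hn => ?_⟩
    obtain ⟨kZ, kY, w, DZ, DY, hZ, hY, hkZ, hkY⟩ := h n hn
    exact ⟨kY, kZ, fun m m' => w m' m, DY, DZ, hY, hZ, hkY, hkZ⟩

lemma IsBC.isChannel_margY {X Y Z : Type*} [Fintype Y] [Fintype Z] {W : X → Y → Z → ℝ}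
    (hW : IsBC W) : IsChannel (margY W) :=
  ⟨fun x y => sum_nonneg fun z _ => hW.1 x y z, hW.2⟩

lemma IsBC.isChannel_margZ {X Y Z : Type*} [Fintype Y] [Fintype Z] {W : X → Y → Z → ℝ}
    (hW : IsBC W) : IsChannel (margZ W) :=
  ⟨fun x z => sum_nonneg fun y _ => hW.1 x y z, fun x => by
    rw [← hW.2 x]
    exact sum_comm⟩

/-- **Claim 2.** Direct part of Theorem 3 with exponentially
decaying error probabilities and deterministic encoders. -/
theorem bc_id_direct_part_deterministic
    {X Y Z : Type} [Fintype X] [Fintype Y] [Fintype Z]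
    [Nonempty X] [Nonempty Y] [Nonempty Z]
    (W : X → Y → Z → ℝ) (hW : IsBC W)
    (P : X → ℝ) (hP : IsPMF P)
    (RY RZ : ℝ) (hRY0 : 0 < RY) (hRY : RY < mutInf P (margY W))
    (hRZ0 : 0 < RZ) (hRZ : RZ < mutInf P (margZ W)) :
    ∃ τ : ℝ, 0 < τ ∧ ∃ n₀ : ℕ, ∀ n : ℕ, n₀ ≤ n →
      ∃ (kY kZ : ℕ) (Q : Fin kY → Fin kZ → (Fin n → X) → ℝ)
        (DY : Fin kY → Finset (Fin n → Y)) (DZ : Fin kZ → Finset (Fin n → Z)),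
        IsBCIDCode n kY kZ W Q DY DZ
          (Real.exp (-(n * τ))) (Real.exp (-(n * τ)))
          (Real.exp (-(n * τ))) (Real.exp (-(n * τ))) ∧
        RY ≤ (1 / n) * Real.log (Real.log kY) ∧
        RZ ≤ (1 / n) * Real.log (Real.log kZ) ∧
        ∀ my mz, ∃ x0 : Fin n → X, ∀ x, Q my mz x = if x = x0 then 1 else 0 := by
  obtain ⟨τ, hτ, n₀, h⟩ := exists_codeword_array hW.isChannel_margY hW.isChannel_margZ hP
    hRY0 hRY hRZ0 hRZ
  refine ⟨τ, hτ, n₀, fun n hn => ?_⟩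
  obtain ⟨kY, kZ, w, DY, DZ, hY, hZ, hkY, hkZ⟩ := h n hn
  refine ⟨kY, kZ, fun my mz x => if x = w my mz then 1 else 0, DY, DZ, ⟨fun my mz => ⟨fun x => ?_,
    ?_⟩, hY, hZ⟩, hkY, hkZ, fun my mz => ⟨w my mz, fun x => rfl⟩⟩
  · dsimp only
    split_ifs <;> norm_num
  · simp
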